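/- arXiv:2109.10881 — 2 statements merged into one kernel-verified Lean document; each statement's English description precedes it below -/
import Mathlib

section
/- Let Ω ⊆ ℍ be open, θ ∈ [0,2π), u ∈ ℍ, and let f : Ω → ℍ be of class C¹. Then for every z ∈ Ω, ${}^θ𝒟[\,e^{⟨u,·⟩_θ} f\,](z) = e^{⟨u,z⟩_θ}\,\big({}^θ𝒟 f(z) + u\,f(z)\big) = e^{⟨u,z⟩_θ}\,{}^θ_u𝒟 f(z)$, where $e^{⟨u,z⟩_θ}$ denotes the real exponential of $⟨u,z⟩_θ$. -/
open MeasureTheory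

noncomputable section

/-- The real quaternions `ℍ`. -/
abbrev H4 : Type := Quaternion ℝ

instance : MeasurableSpace H4 := borel _
instance : BorelSpace H4 := ⟨rfl⟩

/-- The quaternion unit `i`. -/
def qI : H4 := ⟨0, 1, 0, 0⟩
/-- The quaternion unit `j`. -/
def qJ : H4 := ⟨0, 0, 1, 0⟩
/-- `e^{iθ} = cos θ + (sin θ) i` as a quaternion. -/
def eIθ (θ : ℝ) : H4 := ⟨Real.cos θ, Real.sin θ, 0, 0⟩
/-- The basis direction `i e^{iθ} j`. -/
def e2 (θ : ℝ) : H4 := qI * eIθ θ * qJ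
/-- The basis direction `e^{iθ} j`. -/
def e3 (θ : ℝ) : H4 := eIθ θ * qJ

/-- Third θ-coordinate of a quaternion `z = x₀ + x₁ i + x₂ (i e^{iθ} j) + x₃ (e^{iθ} j)`. -/
def x2θ (θ : ℝ) (z : H4) : ℝ := -z.imJ * Real.sin θ + z.imK * Real.cos θ
/-- Fourth θ-coordinate of a quaternion. -/
def x3θ (θ : ℝ) (z : H4) : ℝ := z.imJ * Real.cos θ + z.imK * Real.sin θ

/-- The θ-inner product `⟨u,z⟩_θ`: the dot product of θ-coordinates. -/
def innerθ (θ : ℝ) (u z : H4) : ℝ :=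
  u.re * z.re + u.imI * z.imI + x2θ θ u * x2θ θ z + x3θ θ u * x3θ θ z

/-- Left θ-Cauchy–Riemann operator
`{}^θ𝒟 f = ∂f/∂x₀ + i ∂f/∂x₁ + (i e^{iθ} j) ∂f/∂x₂ + (e^{iθ} j) ∂f/∂x₃`. -/
def Dl (θ : ℝ) (f : H4 → H4) (z : H4) : H4 :=
  fderiv ℝ f z 1 + qI * fderiv ℝ f z qI + e2 θ * fderiv ℝ f z (e2 θ) +
    e3 θ * fderiv ℝ f z (e3 θ)

/-- Left (θ,u)-Cauchy–Riemann operator `{}^θ_u𝒟 f = {}^θ𝒟 f + u f`. -/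
def Dlu (θ : ℝ) (u : H4) (f : H4 → H4) (z : H4) : H4 := Dl θ f z + u * f z

/-- Right θ-Cauchy–Riemann operator. -/
def Dr (θ : ℝ) (f : H4 → H4) (z : H4) : H4 :=
  fderiv ℝ f z 1 + fderiv ℝ f z qI * qI + fderiv ℝ f z (e2 θ) * e2 θ +
    fderiv ℝ f z (e3 θ) * e3 θ

/-- Right (θ,u)-Cauchy–Riemann operator `{}^θ𝒟_{r,u} f = {}^θ𝒟_r f + f u`. -/
def Dru (θ : ℝ) (u : H4) (f : H4 → H4) (z : H4) : H4 := Dr θ f z + f z * u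

/-- Embedding of ℂ into the quaternions, `ℂ ≅ ℝ + ℝi ⊂ ℍ`. -/
def toH (a : ℂ) : H4 := ⟨a.re, a.im, 0, 0⟩

/-- First complex θ-component of a quaternion: `z₁ = x₀ + x₁ i`. -/
def c1 (z : H4) : ℂ := ⟨z.re, z.imI⟩
/-- Second complex θ-component of a quaternion: `z₂ = x₂ + x₃ i`. -/
def c2 (θ : ℝ) (z : H4) : ℂ := ⟨x2θ θ z, x3θ θ z⟩

/-- Wirtinger operator `∂/∂z̄₁ = ∂/∂x₀ + i ∂/∂x₁` on ℂ-valued functions. -/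
def db1 (f : H4 → ℂ) (z : H4) : ℂ := fderiv ℝ f z 1 + Complex.I * fderiv ℝ f z qI
/-- Wirtinger operator `∂/∂z̄₂ = ∂/∂x₂ + i ∂/∂x₃` on ℂ-valued functions. -/
def db2 (θ : ℝ) (f : H4 → ℂ) (z : H4) : ℂ :=
  fderiv ℝ f z (e2 θ) + Complex.I * fderiv ℝ f z (e3 θ)
/-- Wirtinger operator `∂/∂z₂ = ∂/∂x₂ − i ∂/∂x₃` on ℂ-valued functions. -/
def dz2 (θ : ℝ) (f : H4 → ℂ) (z : H4) : ℂ :=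
  fderiv ℝ f z (e2 θ) - Complex.I * fderiv ℝ f z (e3 θ)

/-- `e^{iθ}` as a complex number. -/
def cexpI (θ : ℝ) : ℂ := ⟨Real.cos θ, Real.sin θ⟩

/-! The θ-basis `1, i, i e^{iθ} j, e^{iθ} j` is orthonormal, so `⟨·,·⟩_θ` is the Euclidean inner
product for every `θ`. Hence, multiplying a function by a real-valued `φ`, the product rule adds to
`φ · {}^θ𝒟 f` the term `∑ₖ eₖ ⟨∇φ, eₖ⟩ f`, which is `∇φ · f` by the expansion of `∇φ` in
that basis. The theorem is the case `φ = e^{⟨u,·⟩}`, whose gradient is `φ u`. -/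

theorem e2_eq (θ : ℝ) : e2 θ = ⟨0, 0, -Real.sin θ, Real.cos θ⟩ := by
  ext <;>
    simp only [e2, Quaternion.re_mul, Quaternion.imI_mul, Quaternion.imJ_mul,
      Quaternion.imK_mul] <;>
    simp [qI, qJ, eIθ]

theorem e3_eq (θ : ℝ) : e3 θ = ⟨0, 0, Real.cos θ, Real.sin θ⟩ := by
  ext <;>
    simp only [e3, Quaternion.re_mul, Quaternion.imI_mul, Quaternion.imJ_mul,
      Quaternion.imK_mul] <;>
    simp [qJ, eIθ]

theorem quaternion_inner_eq_sum (u z : H4) :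
    inner ℝ u z = u.re * z.re + u.imI * z.imI + u.imJ * z.imJ + u.imK * z.imK := by
  simp [Quaternion.inner_def]

theorem innerθ_eq_inner (θ : ℝ) (u z : H4) : innerθ θ u z = inner ℝ u z := by
  simp only [innerθ, x2θ, x3θ, quaternion_inner_eq_sum]
  linear_combination (u.imJ * z.imJ + u.imK * z.imK) * Real.sin_sq_add_cos_sq θ

theorem sum_θcoord_smul_θbasis (θ : ℝ) (u : H4) :
    u.re • (1 : H4) + u.imI • qI + x2θ θ u • e2 θ + x3θ θ u • e3 θ = u := by
  ext <;>
    simp only [Quaternion.re_add, Quaternion.imI_add, Quaternion.imJ_add, Quaternion.imK_add,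
      Quaternion.re_smul, Quaternion.imI_smul, Quaternion.imJ_smul, Quaternion.imK_smul,
      Quaternion.re_one, Quaternion.imI_one, Quaternion.imJ_one, Quaternion.imK_one,
      smul_eq_mul] <;>
    simp only [qI, e2_eq, e3_eq, x2θ, x3θ]
  · ring
  · ring
  · linear_combination u.imJ * Real.sin_sq_add_cos_sq θ
  · linear_combination u.imK * Real.sin_sq_add_cos_sq θ

theorem sum_inner_smul_θbasis (θ : ℝ) (u : H4) :
    inner ℝ u 1 • (1 : H4) + inner ℝ u qI • qI + inner ℝ u (e2 θ) • e2 θ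
      + inner ℝ u (e3 θ) • e3 θ = u := by
  have inner_one : inner ℝ u 1 = u.re := by simp [Quaternion.inner_def]
  have inner_qI : inner ℝ u qI = u.imI := by rw [quaternion_inner_eq_sum]; simp [qI]
  have inner_e2 : inner ℝ u (e2 θ) = x2θ θ u := by
    rw [quaternion_inner_eq_sum]; simp [e2_eq, x2θ]
  have inner_e3 : inner ℝ u (e3 θ) = x3θ θ u := by
    rw [quaternion_inner_eq_sum]; simp [e3_eq, x3θ]
  rw [inner_one, inner_qI, inner_e2, inner_e3, sum_θcoord_smul_θbasis]

theorem hasGradientAt_exp_inner {F : Type*} [NormedAddCommGroup F] [InnerProductSpace ℝ F]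
    [CompleteSpace F] (u z : F) :
    HasGradientAt (fun w => Real.exp (inner ℝ u w)) (Real.exp (inner ℝ u z) • u) z := by
  rw [hasGradientAt_iff_hasFDerivAt, map_smul]
  exact (InnerProductSpace.toDual ℝ F u).hasFDerivAt.exp

theorem fderiv_smul_apply_of_hasGradientAt {F E : Type*} [NormedAddCommGroup F]
    [InnerProductSpace ℝ F] [CompleteSpace F] [NormedAddCommGroup E] [NormedSpace ℝ E]
    {φ : F → ℝ} {f : F → E} {g z : F} (hφ : HasGradientAt φ g z) (hf : DifferentiableAt ℝ f z)
    (v : F) :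
    fderiv ℝ (fun w => φ w • f w) z v = φ z • fderiv ℝ f z v + inner ℝ g v • f z := by
  rw [(hφ.hasFDerivAt.fun_smul hf.hasFDerivAt).fderiv]
  simp

theorem Dl_smul (θ : ℝ) {φ : H4 → ℝ} {f : H4 → H4} {g z : H4} (hφ : HasGradientAt φ g z)
    (hf : DifferentiableAt ℝ f z) :
    Dl θ (fun w => φ w • f w) z = φ z • Dl θ f z + g * f z := by
  have expand_g_mul : g * f z = inner ℝ g 1 • f z + inner ℝ g qI • (qI * f z)
      + inner ℝ g (e2 θ) • (e2 θ * f z) + inner ℝ g (e3 θ) • (e3 θ * f z) := by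
    conv_lhs => rw [← sum_inner_smul_θbasis θ g]
    simp only [add_mul, smul_mul_assoc, one_mul]
  simp only [Dl, fderiv_smul_apply_of_hasGradientAt hφ hf, expand_g_mul, mul_add, mul_smul_comm,
    smul_add]
  abel

theorem statement0_general (θ : ℝ) (u z : H4) {f : H4 → H4} (hf : DifferentiableAt ℝ f z) :
    Dl θ (fun w => Real.exp (innerθ θ u w) • f w) z
      = Real.exp (innerθ θ u z) • (Dl θ f z + u * f z) := by
  simp only [innerθ_eq_inner]
  rw [Dl_smul θ (hasGradientAt_exp_inner u z) hf, smul_mul_assoc, smul_add]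

/-- `{}^θ𝒟[e^{⟨u,·⟩_θ} f](z) = e^{⟨u,z⟩_θ}({}^θ𝒟 f(z) + u f(z)) = e^{⟨u,z⟩_θ} {}^θ_u𝒟 f(z)`. -/
theorem statement0 (Ω : Set H4) (hΩ : IsOpen Ω) (θ : ℝ) (hθ : θ ∈ Set.Ico 0 (2 * Real.pi))
    (u : H4) (f : H4 → H4) (hf : ContDiffOn ℝ 1 f Ω) :
    ∀ z ∈ Ω,
      Dl θ (fun w => Real.exp (innerθ θ u w) • f w) z
          = Real.exp (innerθ θ u z) • (Dl θ f z + u * f z) ∧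
      Dl θ (fun w => Real.exp (innerθ θ u w) • f w) z
          = Real.exp (innerθ θ u z) • Dlu θ u f z := by
  intro z hz
  have h := statement0_general θ u z ((hf.contDiffAt (hΩ.mem_nhds hz)).differentiableAt one_ne_zero)
  exact ⟨h, h⟩

end
end

section
/- Let Ω ⊆ ℍ be open, θ ∈ [0,2π), and u = u₁ + (ie^{iθ}j)u₂ ∈ ℍ with u₁, u₂ ∈ ℂ. Let f = f₁ + f₂ j with f₁, f₂ : Ω → ℂ of class C¹. Then ${}^θ_u𝒟 f = 0$ on Ω if and only if both ∂f₁/∂z̄₁ + u₁ f₁ = i e^{iθ}\,\overline{(∂f₂/∂z̄₂ + u₂ f₂)} and ∂f₁/∂z̄₂ + u₂ f₁ = −i e^{iθ}\,\overline{(∂f₂/∂z̄₁ + u₁ f₂)} hold on Ω. -/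
open MeasureTheory

noncomputable section

/-!
Multiplying on the left by `i e^{iθ} j = w j`, with `w = i e^{iθ} ∈ ℂ`, exchanges the two summands
of `ℍ = ℂ ⊕ ℂ j` and conjugates, because `j a = ā j` for `a ∈ ℂ`. With `Pₖ = ∂f₁/∂z̄ₖ + uₖ f₁` and
`Qₖ = ∂f₂/∂z̄ₖ + uₖ f₂`, the `(θ, u)`-Cauchy–Riemann operator applied to `f₁ + f₂ j` is therefore
`(P₁ + Q₁ j) + w j (P₂ + Q₂ j) = (P₁ - w Q̄₂) + (Q₁ + w P̄₂) j`. It vanishes iff `P₁ = w Q̄₂` and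
`Q₁ = -w P̄₂`; since `|w| = 1`, the latter is equivalent to `P₂ = -w Q̄₁`.
-/

section QuaternionComponents

open scoped Quaternion

theorem toH_add (a b : ℂ) : toH (a + b) = toH a + toH b := Quaternion.coeComplex_add a b

theorem toH_mul (a b : ℂ) : toH (a * b) = toH a * toH b := Quaternion.coeComplex_mul a b

theorem toH_sub (a b : ℂ) : toH (a - b) = toH a - toH b := map_sub Quaternion.ofComplex a b

theorem toH_eq_coe (a : ℂ) : toH a = (a : ℍ[ℝ]) := rfl

theorem qI_eq_toH_I : qI = toH Complex.I := rfl

@[simp] theorem re_qJ : qJ.re = 0 := rfl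

@[simp] theorem imI_qJ : qJ.imI = 0 := rfl

@[simp] theorem imJ_qJ : qJ.imJ = 1 := rfl

@[simp] theorem imK_qJ : qJ.imK = 0 := rfl

theorem qJ_mul_qJ : qJ * qJ = -1 := by
  ext <;> simp

theorem qJ_mul_toH (a : ℂ) : qJ * toH a = toH (starRingEnd ℂ a) * qJ := by
  ext <;> simp [toH_eq_coe]

theorem toH_add_toH_mul_qJ_eq_zero_iff (a b : ℂ) : toH a + toH b * qJ = 0 ↔ a = 0 ∧ b = 0 := by
  simp [Quaternion.ext_iff, Complex.ext_iff, toH_eq_coe, and_assoc]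

end QuaternionComponents

theorem e2_eq_toH_mul_qJ (θ : ℝ) : e2 θ = toH (Complex.I * cexpI θ) * qJ := by
  rw [toH_mul]
  rfl

theorem e2_mul_toH (θ : ℝ) (a : ℂ) :
    e2 θ * toH a = toH (Complex.I * cexpI θ * starRingEnd ℂ a) * qJ := by
  rw [e2_eq_toH_mul_qJ, mul_assoc, qJ_mul_toH, ← mul_assoc, ← toH_mul]

theorem e2_mul_qI (θ : ℝ) : e2 θ * qI = e3 θ := by
  have hw : Complex.I * cexpI θ * starRingEnd ℂ Complex.I = cexpI θ := by
    rw [Complex.conj_I]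
    linear_combination -cexpI θ * Complex.I_mul_I
  rw [qI_eq_toH_I, e2_mul_toH, hw]
  rfl

theorem add_e2_mul_eq_toH_add_toH_mul_qJ (θ : ℝ) (a b c d : ℂ) :
    toH a + toH b * qJ + e2 θ * (toH c + toH d * qJ) =
      toH (a - Complex.I * cexpI θ * starRingEnd ℂ d) +
        toH (b + Complex.I * cexpI θ * starRingEnd ℂ c) * qJ := by
  rw [mul_add, ← mul_assoc (e2 θ), e2_mul_toH, e2_mul_toH, mul_assoc _ qJ qJ, qJ_mul_qJ,
    toH_sub, toH_add, add_mul]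
  noncomm_ring

theorem eq_neg_mul_conj_comm {R : Type*} [CommRing R] [StarRing R] {w : R}
    (hw : w * starRingEnd R w = 1) (a b : R) :
    a = -w * starRingEnd R b ↔ b = -w * starRingEnd R a := by
  have solve (x y : R) (h : x = -w * starRingEnd R y) : y = -w * starRingEnd R x := by
    rw [h, map_mul, map_neg, starRingEnd_self_apply]
    linear_combination -y * hw
  exact ⟨solve a b, solve b a⟩

theorem I_mul_cexpI_mul_conj (θ : ℝ) :
    Complex.I * cexpI θ * starRingEnd ℂ (Complex.I * cexpI θ) = 1 := by
  rw [Complex.mul_conj, Complex.normSq_mul, Complex.normSq_I, one_mul, cexpI, Complex.normSq_mk,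
    ← sq, ← sq, Real.cos_sq_add_sin_sq, Complex.ofReal_one]

section Derivatives

variable {E : Type*} [NormedAddCommGroup E] [NormedSpace ℝ E]

/-- The Wirtinger operator `∂/∂v + i ∂/∂w` on quaternion-valued functions, with `i` acting on the
left. The directions `(1, i)` give `∂/∂z̄₁`, and `(i e^{iθ} j, e^{iθ} j)` give `∂/∂z̄₂`. -/
def dbarH (v w : E) (f : E → H4) (z : E) : H4 := fderiv ℝ f z v + qI * fderiv ℝ f z w

theorem hasFDerivAt_toH_comp {f : E → ℂ} {f' : E →L[ℝ] ℂ} {z : E} (hf : HasFDerivAt f f' z) :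
    HasFDerivAt (fun x => toH (f x))
      (Quaternion.ofComplex.toLinearMap.toContinuousLinearMap.comp f') z :=
  Quaternion.ofComplex.toLinearMap.toContinuousLinearMap.hasFDerivAt.comp z hf

theorem fderiv_toH_add_toH_mul_qJ {f₁ f₂ : E → ℂ} {z : E} (h₁ : DifferentiableAt ℝ f₁ z)
    (h₂ : DifferentiableAt ℝ f₂ z) (v : E) :
    fderiv ℝ (fun x => toH (f₁ x) + toH (f₂ x) * qJ) z v =
      toH (fderiv ℝ f₁ z v) + toH (fderiv ℝ f₂ z v) * qJ :=
  congrArg (· v) ((hasFDerivAt_toH_comp h₁.hasFDerivAt).add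
    ((hasFDerivAt_toH_comp h₂.hasFDerivAt).mul_const' qJ)).fderiv

theorem dbarH_toH_add_toH_mul_qJ {f₁ f₂ : E → ℂ} {z : E} (h₁ : DifferentiableAt ℝ f₁ z)
    (h₂ : DifferentiableAt ℝ f₂ z) (v w : E) :
    dbarH v w (fun x => toH (f₁ x) + toH (f₂ x) * qJ) z =
      toH (fderiv ℝ f₁ z v + Complex.I * fderiv ℝ f₁ z w) +
        toH (fderiv ℝ f₂ z v + Complex.I * fderiv ℝ f₂ z w) * qJ := by
  simp only [dbarH, fderiv_toH_add_toH_mul_qJ h₁ h₂, qI_eq_toH_I, toH_add, toH_mul]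
  noncomm_ring

end Derivatives

theorem Dl_eq_dbarH (θ : ℝ) (f : H4 → H4) (z : H4) :
    Dl θ f z = dbarH 1 qI f z + e2 θ * dbarH (e2 θ) (e3 θ) f z := by
  rw [Dl, dbarH, dbarH, mul_add, ← mul_assoc, e2_mul_qI, add_assoc (_ + _)]

theorem Dl_toH_add_toH_mul_qJ (θ : ℝ) {f₁ f₂ : H4 → ℂ} {z : H4}
    (h₁ : DifferentiableAt ℝ f₁ z) (h₂ : DifferentiableAt ℝ f₂ z) :
    Dl θ (fun w => toH (f₁ w) + toH (f₂ w) * qJ) z =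
      toH (db1 f₁ z) + toH (db1 f₂ z) * qJ +
        e2 θ * (toH (db2 θ f₁ z) + toH (db2 θ f₂ z) * qJ) := by
  rw [Dl_eq_dbarH, dbarH_toH_add_toH_mul_qJ h₁ h₂, dbarH_toH_add_toH_mul_qJ h₁ h₂]
  rfl

theorem Dlu_toH_add_toH_mul_qJ (θ : ℝ) (u₁ u₂ : ℂ) {f₁ f₂ : H4 → ℂ} {z : H4}
    (h₁ : DifferentiableAt ℝ f₁ z) (h₂ : DifferentiableAt ℝ f₂ z) :
    Dlu θ (toH u₁ + e2 θ * toH u₂) (fun w => toH (f₁ w) + toH (f₂ w) * qJ) z =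
      toH (db1 f₁ z + u₁ * f₁ z -
          Complex.I * cexpI θ * starRingEnd ℂ (db2 θ f₂ z + u₂ * f₂ z)) +
        toH (db1 f₂ z + u₁ * f₂ z +
          Complex.I * cexpI θ * starRingEnd ℂ (db2 θ f₁ z + u₂ * f₁ z)) * qJ := by
  rw [← add_e2_mul_eq_toH_add_toH_mul_qJ, Dlu, Dl_toH_add_toH_mul_qJ θ h₁ h₂]
  simp only [toH_add, toH_mul]
  noncomm_ring

theorem statement2_general (θ : ℝ) (u₁ u₂ : ℂ) {f₁ f₂ : H4 → ℂ} {z : H4}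
    (hf₁ : DifferentiableAt ℝ f₁ z) (hf₂ : DifferentiableAt ℝ f₂ z) :
    Dlu θ (toH u₁ + e2 θ * toH u₂) (fun w => toH (f₁ w) + toH (f₂ w) * qJ) z = 0 ↔
      db1 f₁ z + u₁ * f₁ z
          = Complex.I * cexpI θ * (starRingEnd ℂ) (db2 θ f₂ z + u₂ * f₂ z) ∧
      db2 θ f₁ z + u₂ * f₁ z
          = -(Complex.I * cexpI θ) * (starRingEnd ℂ) (db1 f₂ z + u₁ * f₂ z) := by
  rw [Dlu_toH_add_toH_mul_qJ θ u₁ u₂ hf₁ hf₂, toH_add_toH_mul_qJ_eq_zero_iff, sub_eq_zero,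
    add_eq_zero_iff_eq_neg, ← neg_mul, eq_neg_mul_conj_comm (I_mul_cexpI_mul_conj θ)]

/-- for `u = u₁ + (ie^{iθ}j)u₂` and `f = f₁ + f₂ j`, `{}^θ_u𝒟 f = 0` on Ω iff the
two complex equations hold on Ω. -/
theorem statement2 (Ω : Set H4) (hΩ : IsOpen Ω) (θ : ℝ) (hθ : θ ∈ Set.Ico 0 (2 * Real.pi))
    (u₁ u₂ : ℂ) (f₁ f₂ : H4 → ℂ)
    (hf₁ : ContDiffOn ℝ 1 f₁ Ω) (hf₂ : ContDiffOn ℝ 1 f₂ Ω) :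
    (∀ z ∈ Ω, Dlu θ (toH u₁ + e2 θ * toH u₂) (fun w => toH (f₁ w) + toH (f₂ w) * qJ) z = 0) ↔
    (∀ z ∈ Ω,
      db1 f₁ z + u₁ * f₁ z
          = Complex.I * cexpI θ * (starRingEnd ℂ) (db2 θ f₂ z + u₂ * f₂ z) ∧
      db2 θ f₁ z + u₂ * f₁ z
          = -(Complex.I * cexpI θ) * (starRingEnd ℂ) (db1 f₂ z + u₁ * f₂ z)) := by
  have diff {f : H4 → ℂ} (hf : ContDiffOn ℝ 1 f Ω) (z) (hz : z ∈ Ω) : DifferentiableAt ℝ f z :=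
    (hf.differentiableOn one_ne_zero).differentiableAt (hΩ.mem_nhds hz)
  exact forall₂_congr fun z hz => statement2_general θ u₁ u₂ (diff hf₁ z hz) (diff hf₂ z hz)

end
end
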